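/- arXiv:1303.5473 — 2 statements merged into one kernel-verified Lean document; each statement's English description precedes it below -/
import Mathlib

section
/- Let P be a finite set of points in the plane in general position and let s, t ∈ P. If the smallest axis-aligned square that contains both s and t and has t as one of its corners is empty, then there is a path from s to t in the θ₄-graph of P of length at most (√2 + 36)·‖s−t‖₂. -/
open scoped BigOperators

/-- Euclidean distance between two points of the plane. -/
noncomputable def dist2 (p q : ℝ × ℝ) : ℝ := Real.sqrt ((p.1 - q.1) ^ 2 + (p.2 - q.2) ^ 2)

/-- `L₁` distance between two points of the plane. -/
def dist1 (p q : ℝ × ℝ) : ℝ := |p.1 - q.1| + |p.2 - q.2|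

/-- `L∞` distance between two points of the plane (half the side of `S_t(s)`). -/
def distInf (p q : ℝ × ℝ) : ℝ := max |p.1 - q.1| |p.2 - q.2|

/-- `cone i p q` : the point `q` lies in the open cone (quadrant) `C_i(p)`. -/
def cone (i : ℕ) (p q : ℝ × ℝ) : Prop :=
  if i = 0 then p.1 < q.1 ∧ q.2 < p.2
  else if i = 1 then p.1 < q.1 ∧ p.2 < q.2
  else if i = 2 then q.1 < p.1 ∧ p.2 < q.2
  else q.1 < p.1 ∧ q.2 < p.2

/-- General position: no two points of `P` on a common vertical line, horizontal line,
or line of slope `+1` or `-1`. -/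
def GenPos (P : Finset (ℝ × ℝ)) : Prop :=
  ∀ p ∈ P, ∀ q ∈ P, p ≠ q →
    p.1 ≠ q.1 ∧ p.2 ≠ q.2 ∧ p.2 - p.1 ≠ q.2 - q.1 ∧ p.2 + p.1 ≠ q.2 + q.1

/-- `IsNbr P i p q` : `q = n_i(p)`, i.e. `q` is a point of `P` in `C_i(p)` minimizing
the `L₁`-distance to `p`. -/
def IsNbr (P : Finset (ℝ × ℝ)) (i : ℕ) (p q : ℝ × ℝ) : Prop :=
  q ∈ P ∧ cone i p q ∧ ∀ r ∈ P, cone i p r → dist1 p q ≤ dist1 p r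

/-- Adjacency in the θ₄-graph of `P`. -/
def Theta4Adj (P : Finset (ℝ × ℝ)) (p q : ℝ × ℝ) : Prop :=
  p ∈ P ∧ q ∈ P ∧ ∃ i < 4, (IsNbr P i p q ∨ IsNbr P i q p)

/-- A walk with `k` edges in the θ₄-graph of `P`, given by its vertices `v 0, …, v k`. -/
def IsTheta4Path (P : Finset (ℝ × ℝ)) (k : ℕ) (v : ℕ → ℝ × ℝ) : Prop :=
  v 0 ∈ P ∧ ∀ j < k, Theta4Adj P (v j) (v (j + 1))

/-- The Euclidean length of a path with `k` edges. -/
noncomputable def pathLength (k : ℕ) (v : ℕ → ℝ × ℝ) : ℝ :=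
  ∑ j ∈ Finset.range k, dist2 (v j) (v (j + 1))

/-- `p` is `t`-protected: no point of `P` lying in `C₁(p)` is on or below the line `ℓ⁻_t`
of slope `-1` through `t`. -/
def TProtected (P : Finset (ℝ × ℝ)) (t p : ℝ × ℝ) : Prop :=
  ∀ q ∈ P, cone 1 p q → t.1 + t.2 < q.1 + q.2


/-- There is a path from `c` to `t` of length at most `L`. -/
def Reach (P : Finset (ℝ × ℝ)) (c t : ℝ × ℝ) (L : ℝ) : Prop :=
  ∃ (k : ℕ) (v : ℕ → ℝ × ℝ), IsTheta4Path P k v ∧ v 0 = c ∧ v k = t ∧ pathLength k v ≤ L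

theorem Reach.refl {P : Finset (ℝ × ℝ)} {c : ℝ × ℝ} {L : ℝ} (hc : c ∈ P) (hL : 0 ≤ L) :
    Reach P c c L := by
  refine ⟨0, fun _ => c, ⟨hc, ?_⟩, rfl, rfl, ?_⟩
  · intro j hj
    omega
  · simpa [pathLength] using hL

theorem Reach.cons {P : Finset (ℝ × ℝ)} {c c' t : ℝ × ℝ} {L L' : ℝ}
    (h : Theta4Adj P c c') (hr : Reach P c' t L) (hL : dist2 c c' + L ≤ L') :
    Reach P c t L' := by
  obtain ⟨k, v, hv, h0, hk, hl⟩ := hr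
  refine ⟨k + 1, fun n => Nat.casesOn n c v, ⟨h.1, ?_⟩, rfl, hk, ?_⟩
  · intro j hj
    cases j with
    | zero =>
      show Theta4Adj P c (v 0)
      rw [h0]
      exact h
    | succ j => exact hv.2 j (by omega)
  · unfold pathLength at hl ⊢
    rw [Finset.sum_range_succ']
    have e : dist2 c (v 0) = dist2 c c' := by rw [h0]
    have : ∑ j ∈ Finset.range k, dist2 (v j) (v (j + 1)) + dist2 c (v 0) ≤ L' := by
      rw [e]
      linarith
    exact this

/-- Symmetries of the plane preserving all the structure. -/
structure PlaneSym (φ : ℝ × ℝ → ℝ × ℝ) : Prop where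
  invol : ∀ p, φ (φ p) = p
  d1 : ∀ p q, dist1 (φ p) (φ q) = dist1 p q
  d2 : ∀ p q, dist2 (φ p) (φ q) = dist2 p q
  cones : ∀ i < 4, ∃ j < 4, ∀ p q, cone i (φ p) (φ q) ↔ cone j p q
  gen : ∀ p q : ℝ × ℝ,
    (p.1 ≠ q.1 ∧ p.2 ≠ q.2 ∧ p.2 - p.1 ≠ q.2 - q.1 ∧ p.2 + p.1 ≠ q.2 + q.1) →
    ((φ p).1 ≠ (φ q).1 ∧ (φ p).2 ≠ (φ q).2 ∧ (φ p).2 - (φ p).1 ≠ (φ q).2 - (φ q).1 ∧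
      (φ p).2 + (φ p).1 ≠ (φ q).2 + (φ q).1)

theorem PlaneSym.adj {φ : ℝ × ℝ → ℝ × ℝ} (h : PlaneSym φ) {P : Finset (ℝ × ℝ)} {p q : ℝ × ℝ}
    (ha : Theta4Adj (P.image φ) p q) : Theta4Adj P (φ p) (φ q) := by
  have mem : ∀ x, x ∈ P.image φ → φ x ∈ P := by
    intro x hx
    obtain ⟨y, hy, rfl⟩ := Finset.mem_image.1 hx
    rw [h.invol]
    exact hy
  have nb : ∀ i < 4, ∀ p q, IsNbr (P.image φ) i p q → ∃ j < 4, IsNbr P j (φ p) (φ q) := by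
    intro i hi p q ⟨h1, h2, h3⟩
    obtain ⟨j, hj, hc⟩ := h.cones i hi
    refine ⟨j, hj, mem _ h1, ?_, ?_⟩
    · rw [← hc, h.invol, h.invol]
      exact h2
    · intro r hr hcr
      have := h3 (φ r) (Finset.mem_image_of_mem _ hr) (by
        rw [← hc, h.invol] at hcr
        exact hcr)
      rw [h.d1, ← h.d1 (φ p) r, h.invol]
      exact this
  obtain ⟨hp, hq, i, hi, hn⟩ := ha
  refine ⟨mem _ hp, mem _ hq, ?_⟩
  rcases hn with hn | hn
  · obtain ⟨j, hj, hh⟩ := nb i hi _ _ hn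
    exact ⟨j, hj, Or.inl hh⟩
  · obtain ⟨j, hj, hh⟩ := nb i hi _ _ hn
    exact ⟨j, hj, Or.inr hh⟩

theorem PlaneSym.reach {φ : ℝ × ℝ → ℝ × ℝ} (h : PlaneSym φ) {P : Finset (ℝ × ℝ)} {c t : ℝ × ℝ} {L : ℝ}
    (hr : Reach (P.image φ) (φ c) (φ t) L) : Reach P c t L := by
  obtain ⟨k, v, hv, h0, hk, hl⟩ := hr
  refine ⟨k, fun n => φ (v n), ⟨?_, fun j hj => h.adj (hv.2 j hj)⟩, ?_, ?_, ?_⟩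
  · have h1 := hv.1
    obtain ⟨y, hy, e⟩ := Finset.mem_image.1 h1
    show φ (v 0) ∈ P
    rw [← e, h.invol]
    exact hy
  · show φ (v 0) = c
    rw [h0, h.invol]
  · show φ (v k) = t
    rw [hk, h.invol]
  · unfold pathLength at hl ⊢
    simp only [h.d2]
    exact hl

theorem PlaneSym.genPos {φ : ℝ × ℝ → ℝ × ℝ} (h : PlaneSym φ) {P : Finset (ℝ × ℝ)} (hP : GenPos P) :
    GenPos (P.image φ) := by
  intro p hp q hq hpq
  obtain ⟨p', hp', rfl⟩ := Finset.mem_image.1 hp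
  obtain ⟨q', hq', rfl⟩ := Finset.mem_image.1 hq
  exact h.gen _ _ (hP p' hp' q' hq' (fun e => hpq (by rw [e])))

def swp (p : ℝ × ℝ) : ℝ × ℝ := (p.2, p.1)
def ngx (p : ℝ × ℝ) : ℝ × ℝ := (-p.1, p.2)
def ngy (p : ℝ × ℝ) : ℝ × ℝ := (p.1, -p.2)

theorem sym_swp : PlaneSym swp where
  invol p := rfl
  d1 p q := by simp only [dist1, swp]; ring
  d2 p q := by simp only [dist2, swp]; congr 1; ring
  cones i hi := by
    interval_cases i
    · exact ⟨2, by norm_num, fun p q => by simp [cone, swp, and_comm]⟩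
    · exact ⟨1, by norm_num, fun p q => by simp [cone, swp, and_comm]⟩
    · exact ⟨0, by norm_num, fun p q => by simp [cone, swp, and_comm]⟩
    · exact ⟨3, by norm_num, fun p q => by simp [cone, swp, and_comm]⟩
  gen p q := by
    rintro ⟨h1, h2, h3, h4⟩
    refine ⟨h2, h1, fun h => h3 ?_, fun h => h4 ?_⟩ <;> simp only [swp] at h <;> linarith

theorem sym_ngx : PlaneSym ngx where
  invol p := by simp [ngx]
  d1 p q := by
    simp only [dist1, ngx]
    rw [show -p.1 - -q.1 = -(p.1 - q.1) by ring, abs_neg]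
  d2 p q := by simp only [dist2, ngx]; congr 1; ring
  cones i hi := by
    interval_cases i
    · exact ⟨3, by norm_num, fun p q => by simp [cone, ngx]⟩
    · exact ⟨2, by norm_num, fun p q => by simp [cone, ngx]⟩
    · exact ⟨1, by norm_num, fun p q => by simp [cone, ngx]⟩
    · exact ⟨0, by norm_num, fun p q => by simp [cone, ngx]⟩
  gen p q := by
    rintro ⟨h1, h2, h3, h4⟩
    refine ⟨fun h => h1 ?_, h2, fun h => h4 ?_, fun h => h3 ?_⟩ <;> simp only [ngx] at h <;>
      linarith

theorem sym_ngy : PlaneSym ngy where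
  invol p := by simp [ngy]
  d1 p q := by
    simp only [dist1, ngy]
    rw [show -p.2 - -q.2 = -(p.2 - q.2) by ring, abs_neg]
  d2 p q := by simp only [dist2, ngy]; congr 1; ring
  cones i hi := by
    interval_cases i
    · exact ⟨1, by norm_num, fun p q => by simp [cone, ngy]⟩
    · exact ⟨0, by norm_num, fun p q => by simp [cone, ngy]⟩
    · exact ⟨3, by norm_num, fun p q => by simp [cone, ngy]⟩
    · exact ⟨2, by norm_num, fun p q => by simp [cone, ngy]⟩
  gen p q := by
    rintro ⟨h1, h2, h3, h4⟩
    refine ⟨h1, fun h => h2 ?_, fun h => h4 ?_, fun h => h3 ?_⟩ <;> simp only [ngy] at h <;>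
      linarith

theorem dist2_le_dist1 (p q : ℝ × ℝ) : dist2 p q ≤ dist1 p q := by
  unfold dist2 dist1
  rw [Real.sqrt_le_left (by positivity)]
  have h1 := sq_abs (p.1 - q.1)
  have h2 := sq_abs (p.2 - q.2)
  nlinarith [abs_nonneg (p.1 - q.1), abs_nonneg (p.2 - q.2),
    mul_nonneg (abs_nonneg (p.1 - q.1)) (abs_nonneg (p.2 - q.2))]

theorem exists_nbr {P : Finset (ℝ × ℝ)} {i : ℕ} {p q : ℝ × ℝ} (hq : q ∈ P) (hc : cone i p q) :
    ∃ r, IsNbr P i p r := by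
  classical
  obtain ⟨r, hr, hm⟩ := Finset.exists_min_image (P.filter (fun q => cone i p q)) (dist1 p)
    ⟨q, Finset.mem_filter.2 ⟨hq, hc⟩⟩
  rw [Finset.mem_filter] at hr
  exact ⟨r, hr.1, hr.2, fun x hx hcx => hm x (Finset.mem_filter.2 ⟨hx, hcx⟩)⟩

theorem dist1_of_cone0 {p q : ℝ × ℝ} (h : p.1 < q.1 ∧ q.2 < p.2) :
    dist1 p q = (p.2 - p.1) - (q.2 - q.1) := by
  unfold dist1
  rw [abs_of_neg (by linarith [h.1]), abs_of_pos (by linarith [h.2])]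
  ring

theorem dist1_of_cone3 {p q : ℝ × ℝ} (h : q.1 < p.1 ∧ q.2 < p.2) :
    dist1 p q = (p.1 + p.2) - (q.1 + q.2) := by
  unfold dist1
  rw [abs_of_pos (by linarith [h.1]), abs_of_pos (by linarith [h.2])]
  ring

theorem dist1_of_cone1 {p q : ℝ × ℝ} (h : p.1 < q.1 ∧ p.2 < q.2) :
    dist1 p q = (q.1 + q.2) - (p.1 + p.2) := by
  unfold dist1
  rw [abs_of_neg (by linarith [h.1]), abs_of_neg (by linarith [h.2])]
  ring

/-- A point of `C₀(p)` yields the neighbour of `p` in that cone. -/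
theorem nbr0 {P : Finset (ℝ × ℝ)} {p q : ℝ × ℝ} (hp : p ∈ P) (hq : q ∈ P)
    (h : p.1 < q.1 ∧ q.2 < p.2) :
    ∃ r ∈ P, Theta4Adj P p r ∧ p.1 < r.1 ∧ r.2 < p.2 ∧
      dist2 p r ≤ (p.2 - p.1) - (r.2 - r.1) ∧
      ∀ x ∈ P, p.1 < x.1 → x.2 < p.2 → x.2 - x.1 ≤ r.2 - r.1 := by
  obtain ⟨r, hr⟩ := exists_nbr (i := 0) hq (by simpa [cone] using h)
  have hc : p.1 < r.1 ∧ r.2 < p.2 := by simpa [cone] using hr.2.1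
  refine ⟨r, hr.1, ⟨hp, hr.1, 0, by norm_num, Or.inl hr⟩, hc.1, hc.2, ?_, ?_⟩
  · rw [← dist1_of_cone0 hc]
    exact dist2_le_dist1 _ _
  · intro x hx h1 h2
    have := hr.2.2 x hx (by simpa [cone] using ⟨h1, h2⟩)
    rw [dist1_of_cone0 hc, dist1_of_cone0 ⟨h1, h2⟩] at this
    linarith

/-- A point of `C₃(p)` yields the neighbour of `p` in that cone. -/
theorem nbr3 {P : Finset (ℝ × ℝ)} {p q : ℝ × ℝ} (hp : p ∈ P) (hq : q ∈ P)
    (h : q.1 < p.1 ∧ q.2 < p.2) :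
    ∃ r ∈ P, Theta4Adj P p r ∧ r.1 < p.1 ∧ r.2 < p.2 ∧
      dist2 p r ≤ (p.1 + p.2) - (r.1 + r.2) ∧
      ∀ x ∈ P, x.1 < p.1 → x.2 < p.2 → x.1 + x.2 ≤ r.1 + r.2 := by
  obtain ⟨r, hr⟩ := exists_nbr (i := 3) hq (by simpa [cone] using h)
  have hc : r.1 < p.1 ∧ r.2 < p.2 := by simpa [cone] using hr.2.1
  refine ⟨r, hr.1, ⟨hp, hr.1, 3, by norm_num, Or.inl hr⟩, hc.1, hc.2, ?_, ?_⟩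
  · rw [← dist1_of_cone3 hc]
    exact dist2_le_dist1 _ _
  · intro x hx h1 h2
    have := hr.2.2 x hx (by simpa [cone] using ⟨h1, h2⟩)
    rw [dist1_of_cone3 hc, dist1_of_cone3 ⟨h1, h2⟩] at this
    linarith

/-- A point of `C₁(p)` yields the neighbour of `p` in that cone. -/
theorem nbr1 {P : Finset (ℝ × ℝ)} {p q : ℝ × ℝ} (hp : p ∈ P) (hq : q ∈ P)
    (h : p.1 < q.1 ∧ p.2 < q.2) :
    ∃ r ∈ P, Theta4Adj P p r ∧ p.1 < r.1 ∧ p.2 < r.2 ∧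
      dist2 p r ≤ (r.1 + r.2) - (p.1 + p.2) ∧
      ∀ x ∈ P, p.1 < x.1 → p.2 < x.2 → r.1 + r.2 ≤ x.1 + x.2 := by
  obtain ⟨r, hr⟩ := exists_nbr (i := 1) hq (by simpa [cone] using h)
  have hc : p.1 < r.1 ∧ p.2 < r.2 := by simpa [cone] using hr.2.1
  refine ⟨r, hr.1, ⟨hp, hr.1, 1, by norm_num, Or.inl hr⟩, hc.1, hc.2, ?_, ?_⟩
  · rw [← dist1_of_cone1 hc]
    exact dist2_le_dist1 _ _
  · intro x hx h1 h2
    have := hr.2.2 x hx (by simpa [cone] using ⟨h1, h2⟩)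
    rw [dist1_of_cone1 hc, dist1_of_cone1 ⟨h1, h2⟩] at this
    linarith

/-- The number of points of `P` whose larger coordinate relative to `t` is below `h`. -/
noncomputable def rnk (P : Finset (ℝ × ℝ)) (t : ℝ × ℝ) (h : ℝ) : ℕ :=
  (P.filter (fun q => max (q.1 - t.1) (q.2 - t.2) < h)).card

theorem rnk_lt {P : Finset (ℝ × ℝ)} {t q : ℝ × ℝ} {h h' : ℝ} (hq : q ∈ P)
    (h1 : max (q.1 - t.1) (q.2 - t.2) = h') (h2 : h' < h) : rnk P t h' < rnk P t h := by
  unfold rnk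
  apply Finset.card_lt_card
  rw [Finset.ssubset_iff_of_subset]
  · refine ⟨q, ?_, ?_⟩
    · rw [Finset.mem_filter]
      exact ⟨hq, by rw [h1]; exact h2⟩
    · rw [Finset.mem_filter]
      rintro ⟨_, h3⟩
      rw [h1] at h3
      exact lt_irrefl _ h3
  · intro x hx
    rw [Finset.mem_filter] at hx ⊢
    exact ⟨hx.1, hx.2.trans h2⟩

theorem rnk_swp (P : Finset (ℝ × ℝ)) (t : ℝ × ℝ) (h : ℝ) :
    rnk (P.image swp) (swp t) h = rnk P t h := by
  unfold rnk
  rw [Finset.filter_image, Finset.card_image_of_injective]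
  · congr 1
    apply Finset.filter_congr
    intro x _
    simp only [swp, max_comm]
  · intro x y hxy
    have := congrArg swp hxy
    simpa [swp] using this

theorem core (n : ℕ) : ∀ (P : Finset (ℝ × ℝ)) (t c : ℝ × ℝ) (α d : ℝ), GenPos P → t ∈ P → c ∈ P →
    (∀ q ∈ P, ¬ (-d < q.1 - t.1 ∧ q.1 < t.1 ∧ -d < q.2 - t.2 ∧ q.2 < t.2)) →
    t.2 < c.2 → c.1 - t.1 ≤ c.2 - t.2 → -d ≤ c.1 - t.1 → c.2 - t.2 ≤ d →
    (c.1 - t.1) + (c.2 - t.2) ≤ α → 0 ≤ α →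
    (∀ q ∈ P, q.2 < c.2 → q.1 - t.1 ≤ q.2 - t.2 → (q.1 - t.1) + (q.2 - t.2) ≤ α) →
    rnk P t (c.2 - t.2) ≤ n →
    Reach P c t ((c.2 - t.2) - (c.1 - t.1) + 2 * α) := by
  induction n using Nat.strong_induction_on with
  | _ n ih =>
  intro P t c α d hP ht hc hE hy hb hx hd ha hα hI hn
  by_cases hS : ∃ q ∈ P, c.1 < q.1 ∧ q.2 < c.2 ∧ q.1 - t.1 ≤ q.2 - t.2
  · -- take the step into the cone `C₀`
    obtain ⟨q, hq, hq1, hq2, hq3⟩ := hS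
    obtain ⟨s, hs, hadj, hs1, hs2, hsd, hsm⟩ := nbr0 hc hq ⟨hq1, hq2⟩
    have h1 := hsm q hq hq1 hq2
    by_cases hst : s = t
    · subst hst
      refine Reach.cons hadj (Reach.refl hs le_rfl) ?_
      linarith
    have hg := hP s hs t ht hst
    have hs0 : t.2 < s.2 := by
      rcases lt_trichotomy t.2 s.2 with h | h | h
      · exact h
      · exact absurd h.symm hg.2.1
      · exact absurd ⟨by linarith, by linarith, by linarith, h⟩ (hE s hs)
    have hmax : max (s.1 - t.1) (s.2 - t.2) = s.2 - t.2 := max_eq_right (by linarith)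
    have hr : rnk P t (s.2 - t.2) < rnk P t (c.2 - t.2) := rnk_lt hs hmax (by linarith)
    refine Reach.cons hadj (ih _ (lt_of_lt_of_le hr hn) P t s α d hP ht hs hE hs0 (by linarith)
      (by linarith) (by linarith) (hI s hs hs2 (by linarith)) hα
      (fun q hq h => hI q hq (by linarith)) le_rfl) ?_
    linarith
  · -- take the step into the cone `C₃`
    push Not at hS
    have hct : c ≠ t := by
      rintro rfl
      exact lt_irrefl _ hy
    have hx0 : t.1 < c.1 := by
      rcases lt_trichotomy t.1 c.1 with h | h | h
      · exact h
      · exact absurd h.symm (hP c hc t ht hct).1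
      · have := hS t ht h hy
        linarith
    obtain ⟨w, hw, hadj, hw1, hw2, hwd, hwm⟩ := nbr3 hc ht ⟨hx0, hy⟩
    have h1 := hwm t ht hx0 hy
    by_cases hwt : w = t
    · subst hwt
      refine Reach.cons hadj (Reach.refl hw le_rfl) ?_
      linarith
    have hg := hP w hw t ht hwt
    rcases le_or_gt (w.1 - t.1) (w.2 - t.2) with hwb | hwb
    · -- stay above the diagonal
      have hw0 : t.2 < w.2 := by
        rcases lt_trichotomy t.2 w.2 with h | h | h
        · exact h
        · exact absurd h.symm hg.2.1
        · linarith
      have hmax : max (w.1 - t.1) (w.2 - t.2) = w.2 - t.2 := max_eq_right (by linarith)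
      have hr : rnk P t (w.2 - t.2) < rnk P t (c.2 - t.2) := rnk_lt hw hmax (by linarith)
      refine Reach.cons hadj (ih _ (lt_of_lt_of_le hr hn) P t w
        ((w.1 - t.1) + (w.2 - t.2)) d hP ht hw hE hw0 hwb
        (by linarith) (by linarith) le_rfl (by linarith) ?_ le_rfl) ?_
      · intro q hq hq2 hqb
        rcases lt_trichotomy q.1 c.1 with h | h | h
        · have := hwm q hq h (by linarith)
          linarith
        · have hqc : q ≠ c := by
            rintro rfl
            linarith
          exact absurd h (hP q hq c hc hqc).1
        · have := hS q hq h (by linarith)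
          linarith
      · linarith
    · -- cross the diagonal
      have hw0 : t.1 < w.1 := by linarith
      have hmax : max (w.1 - t.1) (w.2 - t.2) = w.1 - t.1 := max_eq_left (by linarith)
      have hr : rnk P t (w.1 - t.1) < rnk P t (c.2 - t.2) := rnk_lt hw hmax (by linarith)
      have hR : Reach P w t ((w.1 - t.1) - (w.2 - t.2) + 2 * ((w.1 - t.1) + (w.2 - t.2))) := by
        apply sym_swp.reach
        have hm := ih _ (lt_of_lt_of_le hr hn) (P.image swp) (swp t) (swp w)
          ((w.1 - t.1) + (w.2 - t.2)) d (sym_swp.genPos hP) (Finset.mem_image_of_mem _ ht)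
          (Finset.mem_image_of_mem _ hw)
        simp only [Finset.forall_mem_image, swp] at hm
        apply hm
        · intro q hq h
          exact hE q hq ⟨h.2.2.1, h.2.2.2, h.1, h.2.1⟩
        · exact hw0
        · linarith
        · linarith
        · linarith
        · linarith
        · linarith
        · intro q hq hq1 hqb
          have := hwm q hq (by linarith) (by linarith)
          linarith
        · exact (rnk_swp P t (w.1 - t.1)).le
      refine Reach.cons hadj hR ?_
      linarith

/-- The version of `core` used for a point of `C₂(t)` below the antidiagonal. -/
theorem fromC2 (P : Finset (ℝ × ℝ)) (t p : ℝ × ℝ) (d : ℝ) (hP : GenPos P) (ht : t ∈ P)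
    (hp : p ∈ P)
    (hE : ∀ q ∈ P, ¬ (-d < q.1 - t.1 ∧ q.1 < t.1 ∧ -d < q.2 - t.2 ∧ q.2 < t.2))
    (h1 : -d ≤ p.1 - t.1) (h2 : t.2 < p.2) (h3 : (p.1 - t.1) + (p.2 - t.2) ≤ 0) :
    Reach P p t (6 * d) := by
  have h := core _ P t p (2 * (p.2 - t.2)) d hP ht hp hE h2 (by linarith) h1 (by linarith)
    (by linarith) (by linarith) (fun q hq ha hb => by linarith) le_rfl
  obtain ⟨k, v, h4, h5, h6, h7⟩ := h
  exact ⟨k, v, h4, h5, h6, by linarith⟩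

theorem main3 (P : Finset (ℝ × ℝ)) (hP : GenPos P) (s t : ℝ × ℝ) (d : ℝ)
    (hs : s ∈ P) (ht : t ∈ P) (h1 : s.1 < t.1) (h2 : s.2 < t.2)
    (hd1 : t.1 - s.1 ≤ d) (hd2 : t.2 - s.2 ≤ d)
    (hE : ∀ q ∈ P, ¬ (-d < q.1 - t.1 ∧ q.1 < t.1 ∧ -d < q.2 - t.2 ∧ q.2 < t.2)) :
    Reach P s t ((t.1 - s.1) + (t.2 - s.2) + 6 * d) := by
  obtain ⟨p, hp, hadj, hp1, hp2, hpd, hpm⟩ := nbr1 hs ht ⟨h1, h2⟩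
  have h3 := hpm t ht h1 h2
  by_cases hpt : p = t
  · subst hpt
    exact Reach.cons hadj (Reach.refl hp le_rfl) (by linarith)
  have hg := hP p hp t ht hpt
  rcases lt_trichotomy t.2 p.2 with h | h | h
  · exact Reach.cons hadj (fromC2 P t p d hP ht hp hE (by linarith) h (by linarith)) (by linarith)
  · exact absurd h.symm hg.2.1
  · have hx : t.1 < p.1 := by
      rcases lt_trichotomy t.1 p.1 with h' | h' | h'
      · exact h'
      · exact absurd h'.symm hg.1
      · exact absurd ⟨by linarith, h', by linarith, h⟩ (hE p hp)
    have hR : Reach P p t (6 * d) := by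
      apply sym_swp.reach
      apply fromC2 _ _ _ _ (sym_swp.genPos hP) (Finset.mem_image_of_mem _ ht)
        (Finset.mem_image_of_mem _ hp)
      · simp only [Finset.forall_mem_image, swp]
        intro q hq h
        exact hE q hq ⟨h.2.2.1, h.2.2.2, h.1, h.2.1⟩
      · simp only [swp]
        linarith
      · simpa only [swp] using hx
      · simp only [swp]
        linarith
    exact Reach.cons hadj hR (by linarith)

/-- The bound for `s` in `C₃(t)`, with the emptiness hypothesis of the theorem. -/
theorem mainA (P : Finset (ℝ × ℝ)) (hP : GenPos P) (s t : ℝ × ℝ)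
    (hs : s ∈ P) (ht : t ∈ P) (h1 : s.1 < t.1) (h2 : s.2 < t.2)
    (hempty : ∀ q ∈ P,
      ¬ (|q.1 - t.1| < distInf s t ∧ |q.2 - t.2| < distInf s t ∧
         0 < (q.1 - t.1) * (s.1 - t.1) ∧ 0 < (q.2 - t.2) * (s.2 - t.2))) :
    Reach P s t ((Real.sqrt 2 + 36) * dist2 s t) := by
  have e1 : |s.1 - t.1| = t.1 - s.1 := by rw [abs_of_neg (by linarith)]; ring
  have e2 : |s.2 - t.2| = t.2 - s.2 := by rw [abs_of_neg (by linarith)]; ring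
  have hd1 : t.1 - s.1 ≤ distInf s t := by rw [← e1]; exact le_max_left _ _
  have hd2 : t.2 - s.2 ≤ distInf s t := by rw [← e2]; exact le_max_right _ _
  have h := main3 P hP s t (distInf s t) hs ht h1 h2 hd1 hd2 (by
    rintro q hq ⟨a1, a2, a3, a4⟩
    refine hempty q hq ⟨?_, ?_, ?_, ?_⟩
    · rw [abs_lt]
      exact ⟨a1, by linarith⟩
    · rw [abs_lt]
      exact ⟨a3, by linarith⟩
    · exact mul_pos_of_neg_of_neg (by linarith) (by linarith)
    · exact mul_pos_of_neg_of_neg (by linarith) (by linarith))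
  obtain ⟨k, v, h4, h5, h6, h7⟩ := h
  refine ⟨k, v, h4, h5, h6, h7.trans ?_⟩
  have b0 : 0 ≤ dist2 s t := Real.sqrt_nonneg _
  have b1 : distInf s t ≤ dist2 s t := by
    unfold distInf dist2
    apply max_le <;> apply Real.abs_le_sqrt
    · nlinarith [sq_nonneg (s.2 - t.2)]
    · nlinarith [sq_nonneg (s.1 - t.1)]
  have b2 : (t.1 - s.1) + (t.2 - s.2) ≤ Real.sqrt 2 * dist2 s t := by
    unfold dist2
    rw [← Real.sqrt_mul (by norm_num)]
    apply Real.le_sqrt_of_sq_le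
    nlinarith [sq_nonneg ((t.1 - s.1) - (t.2 - s.2))]
  linarith

theorem mainB (P : Finset (ℝ × ℝ)) (hP : GenPos P) (s t : ℝ × ℝ)
    (hs : s ∈ P) (ht : t ∈ P) (h1 : s.1 < t.1) (hne : s.2 ≠ t.2)
    (hempty : ∀ q ∈ P,
      ¬ (|q.1 - t.1| < distInf s t ∧ |q.2 - t.2| < distInf s t ∧
         0 < (q.1 - t.1) * (s.1 - t.1) ∧ 0 < (q.2 - t.2) * (s.2 - t.2))) :
    Reach P s t ((Real.sqrt 2 + 36) * dist2 s t) := by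
  rcases lt_or_gt_of_ne hne with h2 | h2
  · exact mainA P hP s t hs ht h1 h2 hempty
  · apply sym_ngy.reach
    rw [← sym_ngy.d2]
    have ab : ∀ x y : ℝ, |-x - -y| = |x - y| := fun x y => by
      rw [show -x - -y = -(x - y) by ring, abs_neg]
    have ml : ∀ x y z : ℝ, (-x - -y) * (-z - -y) = (x - y) * (z - y) := fun x y z => by ring
    apply mainA _ (sym_ngy.genPos hP) _ _ (Finset.mem_image_of_mem _ hs)
      (Finset.mem_image_of_mem _ ht) h1 (by simpa [ngy] using h2)
    simp only [Finset.forall_mem_image, ngy, distInf, ab, ml]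
    exact hempty

theorem approx_Linfty_edge (P : Finset (ℝ × ℝ)) (hP : GenPos P) (s t : ℝ × ℝ)
    (hs : s ∈ P) (ht : t ∈ P)
    (hempty : ∀ q ∈ P,
      ¬ (|q.1 - t.1| < distInf s t ∧ |q.2 - t.2| < distInf s t ∧
         0 < (q.1 - t.1) * (s.1 - t.1) ∧ 0 < (q.2 - t.2) * (s.2 - t.2))) :
    ∃ (k : ℕ) (v : ℕ → ℝ × ℝ), IsTheta4Path P k v ∧ v 0 = s ∧ v k = t ∧
      pathLength k v ≤ (Real.sqrt 2 + 36) * dist2 s t := by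
  show Reach P s t ((Real.sqrt 2 + 36) * dist2 s t)
  by_cases hst : s = t
  · subst hst
    apply Reach.refl hs
    have : 0 ≤ dist2 s s := Real.sqrt_nonneg _
    positivity
  have hg := hP s hs t ht hst
  rcases lt_or_gt_of_ne hg.1 with h1 | h1
  · exact mainB P hP s t hs ht h1 hg.2.1 hempty
  · apply sym_ngx.reach
    rw [← sym_ngx.d2]
    have ab : ∀ x y : ℝ, |-x - -y| = |x - y| := fun x y => by
      rw [show -x - -y = -(x - y) by ring, abs_neg]
    have ml : ∀ x y z : ℝ, (-x - -y) * (-z - -y) = (x - y) * (z - y) := fun x y z => by ring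
    apply mainB _ (sym_ngx.genPos hP) _ _ (Finset.mem_image_of_mem _ hs)
      (Finset.mem_image_of_mem _ ht) (by simpa [ngx] using h1) hg.2.1
    simp only [Finset.forall_mem_image, ngx, distInf, ab, ml]
    exact hempty
end

section
/- Let P be a finite set of points in the plane in general position and let a, b ∈ P lie on two sides sharing a corner (consecutive sides) of some axis-aligned square with empty interior. Then there is a path from a to b in the θ₄-graph of P of length at most (√2 + 36)·‖a−b‖₂. -/
open scoped BigOperators

/-- Membership in the (closed) axis-aligned square with bottom-left corner `(x0, y0)`
and side length `L`. -/
def inSquare (x0 y0 L : ℝ) (q : ℝ × ℝ) : Prop :=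
  x0 ≤ q.1 ∧ q.1 ≤ x0 + L ∧ y0 ≤ q.2 ∧ q.2 ≤ y0 + L

/-- `q` lies on the left side of the square. -/
def onLeft (x0 y0 L : ℝ) (q : ℝ × ℝ) : Prop := q.1 = x0 ∧ y0 ≤ q.2 ∧ q.2 ≤ y0 + L

/-- `q` lies on the right side of the square. -/
def onRight (x0 y0 L : ℝ) (q : ℝ × ℝ) : Prop := q.1 = x0 + L ∧ y0 ≤ q.2 ∧ q.2 ≤ y0 + L

/-- `q` lies on the bottom side of the square. -/
def onBottom (x0 y0 L : ℝ) (q : ℝ × ℝ) : Prop := q.2 = y0 ∧ x0 ≤ q.1 ∧ q.1 ≤ x0 + L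

/-- `q` lies on the top side of the square. -/
def onTop (x0 y0 L : ℝ) (q : ℝ × ℝ) : Prop := q.2 = y0 + L ∧ x0 ≤ q.1 ∧ q.1 ≤ x0 + L

/-- `a` and `b` lie on two sides of the square that share a corner. -/
def onConsecutiveSides (x0 y0 L : ℝ) (a b : ℝ × ℝ) : Prop :=
  (onBottom x0 y0 L a ∧ onLeft x0 y0 L b) ∨ (onBottom x0 y0 L a ∧ onRight x0 y0 L b) ∨
  (onTop x0 y0 L a ∧ onLeft x0 y0 L b) ∨ (onTop x0 y0 L a ∧ onRight x0 y0 L b) ∨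
  (onLeft x0 y0 L a ∧ onBottom x0 y0 L b) ∨ (onRight x0 y0 L a ∧ onBottom x0 y0 L b) ∨
  (onLeft x0 y0 L a ∧ onTop x0 y0 L b) ∨ (onRight x0 y0 L a ∧ onTop x0 y0 L b)

/-- Reachability by a θ₄-walk of Euclidean length at most the given bound. -/
inductive Rch (P : Finset (ℝ × ℝ)) : ℝ × ℝ → ℝ × ℝ → ℝ → Prop
  | refl (p : ℝ × ℝ) (l : ℝ) : p ∈ P → 0 ≤ l → Rch P p p l
  | cons (p q r : ℝ × ℝ) (l l' : ℝ) : Theta4Adj P p q → Rch P q r l → dist2 p q + l ≤ l' →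
      Rch P p r l'

theorem Rch.mono {P : Finset (ℝ × ℝ)} {p q : ℝ × ℝ} {l l' : ℝ} (h : Rch P p q l)
    (hl : l ≤ l') : Rch P p q l' := by
  induction h with
  | refl p l hp h0 => exact Rch.refl _ _ hp (h0.trans hl)
  | cons p q r l l2 hadj hr hle ih => exact Rch.cons _ _ _ _ _ hadj hr (hle.trans hl)

theorem Rch.trans {P : Finset (ℝ × ℝ)} {p q r : ℝ × ℝ} {l l' : ℝ} (h : Rch P p q l)
    (h' : Rch P q r l') : Rch P p r (l + l') := by
  induction h with
  | refl p l hp h0 => exact h'.mono (by linarith)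
  | cons p q s l l2 hadj hr hle ih => exact Rch.cons _ _ _ _ _ hadj (ih h') (by linarith)

theorem Rch.path {P : Finset (ℝ × ℝ)} {p q : ℝ × ℝ} {l : ℝ} (h : Rch P p q l) :
    ∃ (k : ℕ) (v : ℕ → ℝ × ℝ), IsTheta4Path P k v ∧ v 0 = p ∧ v k = q ∧ pathLength k v ≤ l := by
  induction h with
  | refl p l hp h0 =>
    exact ⟨0, fun _ => p, ⟨hp, by simp⟩, rfl, rfl, by simpa [pathLength] using h0⟩
  | cons p q s l l2 hadj hr hle ih =>
    obtain ⟨k, v, ⟨hv0, hv⟩, h0, hk, hlen⟩ := ih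
    refine ⟨k + 1, fun n => Nat.casesOn n p v, ⟨hadj.1, ?_⟩, rfl, hk, ?_⟩
    · intro j hj
      cases j with
      | zero => simpa [h0] using hadj
      | succ j => exact hv j (by omega)
    · unfold pathLength at hlen ⊢
      rw [Finset.sum_range_succ']
      simp only [h0]
      change ∑ x ∈ Finset.range k, dist2 (v x) (v (x + 1)) + dist2 p q ≤ l2
      linarith

/-- A frame: one of the eight signed coordinate systems centred at the target. -/
abbrev Frame := Bool × Bool × Bool

/-- The sign attached to a Boolean. -/
def sg (b : Bool) : ℝ := cond b 1 (-1)

/-- First coordinate in a frame. -/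
def cX (t : ℝ × ℝ) (f : Frame) (p : ℝ × ℝ) : ℝ :=
  sg f.2.1 * cond f.1 (p.2 - t.2) (p.1 - t.1)

/-- Second coordinate in a frame. -/
def cY (t : ℝ × ℝ) (f : Frame) (p : ℝ × ℝ) : ℝ :=
  sg f.2.2 * cond f.1 (p.1 - t.1) (p.2 - t.2)

theorem sg_not (b : Bool) : sg (!b) = -sg b := by cases b <;> simp [sg]

theorem cX_self (t : ℝ × ℝ) (f : Frame) : cX t f t = 0 := by
  rcases f with ⟨s, a, b⟩; cases s <;> simp [cX]

theorem cY_self (t : ℝ × ℝ) (f : Frame) : cY t f t = 0 := by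
  rcases f with ⟨s, a, b⟩; cases s <;> simp [cY]

/-- Nearest neighbour in the positive quadrant of a frame. -/
theorem nbr_exists (P : Finset (ℝ × ℝ)) (t : ℝ × ℝ) (f : Frame) (p : ℝ × ℝ) (hp : p ∈ P)
    (h : ∃ z ∈ P, cX t f p < cX t f z ∧ cY t f p < cY t f z) :
    ∃ q ∈ P, cX t f p < cX t f q ∧ cY t f p < cY t f q ∧ Theta4Adj P p q ∧
      dist2 p q ≤ (cX t f q + cY t f q) - (cX t f p + cY t f p) ∧
      ∀ z ∈ P, cX t f p < cX t f z → cY t f p < cY t f z →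
        cX t f q + cY t f q ≤ cX t f z + cY t f z := by
  classical
  obtain ⟨z0, hz0, hzx, hzy⟩ := h
  obtain ⟨q, hq, hmin⟩ := Finset.exists_min_image
    (P.filter (fun z => cX t f p < cX t f z ∧ cY t f p < cY t f z))
    (fun z => cX t f z + cY t f z) ⟨z0, by simp [hz0, hzx, hzy]⟩
  simp only [Finset.mem_filter] at hq hmin
  obtain ⟨hqP, hqx, hqy⟩ := hq
  have hd : ∀ z, cX t f p < cX t f z → cY t f p < cY t f z →
      dist1 p z = (cX t f z + cY t f z) - (cX t f p + cY t f p) := by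
    intro z h1 h2
    rcases f with ⟨s, a, b⟩
    unfold dist1
    cases s <;> cases a <;> cases b <;> simp [cX, cY, sg] at h1 h2 ⊢
    all_goals
      rcases abs_cases (p.1 - z.1) with h3 | h3 <;> rcases abs_cases (p.2 - z.2) with h4 | h4 <;>
        linarith
  have hc : ∃ i < 4, ∀ z, cone i p z ↔ (cX t f p < cX t f z ∧ cY t f p < cY t f z) := by
    rcases f with ⟨s, a, b⟩
    cases s <;> cases a <;> cases b <;> simp only [cX, cY, sg, cond_true, cond_false]
    on_goal 1 => refine ⟨3, by norm_num, fun z => ?_⟩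
    on_goal 2 => refine ⟨2, by norm_num, fun z => ?_⟩
    on_goal 3 => refine ⟨0, by norm_num, fun z => ?_⟩
    on_goal 4 => refine ⟨1, by norm_num, fun z => ?_⟩
    on_goal 5 => refine ⟨3, by norm_num, fun z => ?_⟩
    on_goal 6 => refine ⟨0, by norm_num, fun z => ?_⟩
    on_goal 7 => refine ⟨2, by norm_num, fun z => ?_⟩
    on_goal 8 => refine ⟨1, by norm_num, fun z => ?_⟩
    all_goals
      simp only [cone]
      norm_num
      try tauto
  refine ⟨q, hqP, hqx, hqy, ?_, ?_, fun z hz h1 h2 => hmin z ⟨hz, h1, h2⟩⟩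
  · obtain ⟨i, hi, hci⟩ := hc
    refine ⟨hp, hqP, i, hi, Or.inl ⟨hqP, (hci q).2 ⟨hqx, hqy⟩, ?_⟩⟩
    intro r hr hcr
    obtain ⟨h1, h2⟩ := (hci r).1 hcr
    rw [hd q hqx hqy, hd r h1 h2]
    linarith [hmin r ⟨hr, h1, h2⟩]
  · exact (dist2_le_dist1 p q).trans (hd q hqx hqy).le

/-- `q` is protected in frame `f`. -/
def Prot (P : Finset (ℝ × ℝ)) (t : ℝ × ℝ) (f : Frame) (q : ℝ × ℝ) : Prop :=
  ∀ z ∈ P, cX t f q < cX t f z → cY t f q < cY t f z → 0 < cX t f z + cY t f z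

/-- The sweeping chain: repeatedly take the nearest neighbour in the positive quadrant
until the current point is protected. -/
theorem chain (P : Finset (ℝ × ℝ)) (t : ℝ × ℝ) (f : Frame) (n : ℕ) :
    ∀ p ∈ P, cX t f p + cY t f p ≤ 0 →
    (P.filter (fun z => cX t f p + cY t f p < cX t f z + cY t f z)).card ≤ n →
    ∃ e ∈ P, Rch P p e ((cX t f e + cY t f e) - (cX t f p + cY t f p)) ∧
      cX t f p ≤ cX t f e ∧ cY t f p ≤ cY t f e ∧ cX t f e + cY t f e ≤ 0 ∧ Prot P t f e := by
  induction n with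
  | zero =>
    intro p hp hs hn
    refine ⟨p, hp, Rch.refl _ _ hp (by linarith), le_rfl, le_rfl, hs, ?_⟩
    intro z hz h1 h2
    have := Finset.card_eq_zero.mp (Nat.le_zero.mp hn)
    have hz' : z ∈ P.filter (fun z => cX t f p + cY t f p < cX t f z + cY t f z) := by
      simp only [Finset.mem_filter]; exact ⟨hz, by linarith⟩
    rw [this] at hz'
    simp at hz'
  | succ n ih =>
    intro p hp hs hn
    by_cases hprot : Prot P t f p
    · exact ⟨p, hp, Rch.refl _ _ hp (by linarith), le_rfl, le_rfl, hs, hprot⟩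
    · unfold Prot at hprot
      push Not at hprot
      obtain ⟨z, hz, h1, h2, h3⟩ := hprot
      obtain ⟨q, hq, hqx, hqy, hadj, hd, hmin⟩ := nbr_exists P t f p hp ⟨z, hz, h1, h2⟩
      have hqs := hmin z hz h1 h2
      have hlt : (P.filter (fun z => cX t f q + cY t f q < cX t f z + cY t f z)).card <
          (P.filter (fun z => cX t f p + cY t f p < cX t f z + cY t f z)).card := by
        apply Finset.card_lt_card
        rw [Finset.ssubset_iff_of_subset]
        · refine ⟨q, ?_, ?_⟩
          · simp only [Finset.mem_filter]; exact ⟨hq, by linarith⟩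
          · simp
        · intro w hw
          simp only [Finset.mem_filter] at hw ⊢
          exact ⟨hw.1, by linarith [hw.2]⟩
      obtain ⟨e, he, hr, hx, hy, hs', hpr⟩ := ih q hq (by linarith) (by omega)
      exact ⟨e, he, Rch.cons _ _ _ _ _ hadj hr (by linarith), by linarith, by linarith, hs', hpr⟩

/-- States of the walk: protected points in the octant of a frame. -/
def St (P : Finset (ℝ × ℝ)) (t : ℝ × ℝ) (f : Frame) (q : ℝ × ℝ) : Prop :=
  q ∈ P ∧ 0 ≤ cY t f q ∧ cX t f q + cY t f q ≤ 0 ∧ Prot P t f q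

/-- One step: from a state to a state of smaller radius. -/
theorem step (P : Finset (ℝ × ℝ)) (t : ℝ × ℝ) (f : Frame) (q : ℝ × ℝ) (ht : t ∈ P)
    (hq : St P t f q) (hx : cX t f q < 0) (hy : 0 < cY t f q)
    (hinj : ∀ z ∈ P, cY t f z = cY t f q → z = q) :
    ∃ (g : Frame) (r : ℝ × ℝ) (lev : ℝ), St P t g r ∧ -cX t g r < -cX t f q ∧ 0 ≤ lev ∧
      (∀ z ∈ P, cX t f q < cX t f z → cX t f z + cY t f z ≤ 0 → cY t f z - cX t f z ≤ lev) ∧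
      Rch P q r ((-cX t f q - cY t f q) - (-cX t g r - cY t g r) +
        2 * ((cY t f q - cX t f q) - lev)) := by
  obtain ⟨hqP, hq0, hqs, hqprot⟩ := hq
  rcases f with ⟨s, a, b⟩
  have e1X : ∀ p, cX t (s, a, !b) p = cX t (s, a, b) p := fun p => rfl
  have e1Y : ∀ p, cY t (s, a, !b) p = -cY t (s, a, b) p := fun p => by
    simp [cY, sg_not]
  have e2X : ∀ p, cX t (s, !a, !b) p = -cX t (s, a, b) p := fun p => by
    simp [cX, sg_not]
  have e2Y : ∀ p, cY t (s, !a, !b) p = -cY t (s, a, b) p := fun p => by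
    simp [cY, sg_not]
  have e3X : ∀ p, cX t (!s, !b, !a) p = -cY t (s, a, b) p := fun p => by
    cases s <;> simp [cX, cY, sg_not]
  have e3Y : ∀ p, cY t (!s, !b, !a) p = -cX t (s, a, b) p := fun p => by
    cases s <;> simp [cX, cY, sg_not]
  have e4X : ∀ p, cX t (!s, !b, a) p = -cY t (s, a, b) p := fun p => by
    cases s <;> simp [cX, cY, sg_not]
  have e4Y : ∀ p, cY t (!s, !b, a) p = cX t (s, a, b) p := fun p => by
    cases s <;> simp [cX, cY]
  have tX := cX_self t (s, a, b)
  have tY := cY_self t (s, a, b)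
  obtain ⟨q', hq'P, hx', hy', hadj, hd, hmin⟩ := nbr_exists P t (s, a, !b) q hqP
    ⟨t, ht, by rw [e1X, e1X, tX]; exact hx, by rw [e1Y, e1Y, tY]; linarith⟩
  have hmt := hmin t ht (by rw [e1X, e1X, tX]; exact hx) (by rw [e1Y, e1Y, tY]; linarith)
  simp only [e1X, e1Y, tX, tY] at hx' hy' hd hmin hmt
  have hclean : ∀ z ∈ P, cX t (s, a, b) q < cX t (s, a, b) z →
      cX t (s, a, b) z + cY t (s, a, b) z ≤ 0 →
      cY t (s, a, b) z - cX t (s, a, b) z ≤ cY t (s, a, b) q' - cX t (s, a, b) q' := by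
    intro z hz h1 h2
    rcases lt_trichotomy (cY t (s, a, b) z) (cY t (s, a, b) q) with h | h | h
    · linarith [hmin z hz h1 (by linarith)]
    · rw [hinj z hz h] at h1; exact absurd h1 (lt_irrefl _)
    · linarith [hqprot z hz h1 h]
  have first : ∀ r l l', Rch P q' r l →
      -cY t (s, a, b) q' + cX t (s, a, b) q' - (cX t (s, a, b) q - cY t (s, a, b) q) + l ≤ l' →
      Rch P q r l' := fun r l l' h hl => Rch.cons _ _ _ _ _ hadj h (by linarith)
  by_cases hA : 0 < cY t (s, a, b) q' ∧ cX t (s, a, b) q' < 0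
  · obtain ⟨hA1, hA2⟩ := hA
    by_cases hB : cX t (s, a, b) q' + cY t (s, a, b) q' ≤ 0
    · obtain ⟨r, hr, hR, hrx, hry, hrs, hrp⟩ := chain P t (s, a, b) _ q' hq'P hB le_rfl
      refine ⟨(s, a, b), r, _, ⟨hr, by linarith, hrs, hrp⟩, by linarith, ?_, hclean,
        first r _ _ hR (by linarith)⟩
      linarith
    · obtain ⟨r, hr, hR, hrx, hry, hrs, hrp⟩ := chain P t (s, !a, !b) _ q' hq'P
        (by rw [e2X, e2Y]; linarith) le_rfl
      simp only [e2X, e2Y] at hR hrx hry hrs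
      refine ⟨(!s, !b, !a), r, _, ⟨hr, ?_, ?_, ?_⟩, ?_, ?_, hclean, first r _ _ hR ?_⟩
      · rw [e3Y]; linarith
      · rw [e3X, e3Y]; linarith
      · intro z hz h1 h2
        have := hrp z hz
        simp only [e2X, e2Y, e3X, e3Y] at this h1 h2 ⊢
        linarith [this h2 h1]
      · rw [e3X]; linarith
      · linarith
      · rw [e3X, e3Y]; linarith
  · obtain ⟨r, hr, hR, hrx, hry, hrs, hrp⟩ := chain P t (s, a, !b) _ q' hq'P
        (by rw [e1X, e1Y]; linarith) le_rfl
    simp only [e1X, e1Y] at hR hrx hry hrs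
    by_cases hC : cY t (s, a, b) q' ≤ 0
    · refine ⟨(s, a, !b), r, _, ⟨hr, ?_, ?_, hrp⟩, ?_, ?_, hclean, first r _ _ hR ?_⟩
      · rw [e1Y]; linarith
      · rw [e1X, e1Y]; linarith
      · rw [e1X]; linarith
      · linarith
      · rw [e1X, e1Y]; linarith
    · have hC2 : 0 ≤ cX t (s, a, b) q' := by
        by_contra hh
        exact hA ⟨not_le.mp hC, not_le.mp hh⟩
      refine ⟨(!s, !b, a), r, _, ⟨hr, ?_, ?_, ?_⟩, ?_, ?_, hclean, first r _ _ hR ?_⟩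
      · rw [e4Y]; linarith
      · rw [e4X, e4Y]; linarith
      · intro z hz h1 h2
        have := hrp z hz
        simp only [e1X, e1Y, e4X, e4Y] at this h1 h2 ⊢
        linarith [this h2 h1]
      · rw [e4X]; linarith
      · linarith
      · rw [e4X, e4Y]; linarith

/-- General position in frame coordinates. -/
theorem frame_inj (P : Finset (ℝ × ℝ)) (hP : GenPos P) (t : ℝ × ℝ) (f : Frame)
    (p q : ℝ × ℝ) (hp : p ∈ P) (hq : q ∈ P) (h : cX t f p = cX t f q ∨ cY t f p = cY t f q) :
    p = q := by
  by_contra hne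
  obtain ⟨h1, h2, -, -⟩ := hP p hp q hq hne
  rcases f with ⟨s, a, b⟩
  cases s <;> cases a <;> cases b <;> simp [cX, cY, sg] at h <;>
    rcases h with h | h <;> first | exact h1 (by linarith) | exact h2 (by linarith)

/-- Main induction with the potential `(u - v) + 2 ∑ m`. -/
theorem main_walk (P : Finset (ℝ × ℝ)) (hP : GenPos P) (t : ℝ × ℝ) (ht : t ∈ P) (n : ℕ) :
    ∀ (f : Frame) (q : ℝ × ℝ) (m : Frame → ℝ), St P t f q → (∀ g, 0 ≤ m g) →
    (∀ g, ∀ z ∈ P, 0 ≤ cY t g z → cX t g z + cY t g z ≤ 0 → -cX t g z ≤ -cX t f q →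
      cY t g z - cX t g z ≤ m g) →
    (((Finset.univ : Finset Frame) ×ˢ P).filter (fun w => -cX t w.1 w.2 < -cX t f q)).card ≤ n →
    Rch P q t ((-cX t f q - cY t f q) + 2 * ∑ g, m g) := by
  classical
  induction n with
  | zero =>
    intro f q m hst hm hinv hn
    by_cases hqt : q = t
    · subst hqt
      have := Finset.sum_nonneg (fun g (_ : g ∈ Finset.univ) => hm g)
      rw [cX_self, cY_self]
      exact Rch.refl _ _ ht (by linarith)
    · exfalso
      have hX : cX t f q ≠ 0 := fun h =>
        hqt (frame_inj P hP t f q t hst.1 ht (Or.inl (by rw [h, cX_self])))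
      have hX' : cX t f q < 0 := lt_of_le_of_ne (by linarith [hst.2.1, hst.2.2.1]) hX
      have h0 := Finset.card_eq_zero.mp (Nat.le_zero.mp hn)
      have : (f, t) ∈ ((Finset.univ : Finset Frame) ×ˢ P).filter
          (fun w => -cX t w.1 w.2 < -cX t f q) := by
        simp only [Finset.mem_filter, Finset.mem_product, Finset.mem_univ, true_and]
        exact ⟨ht, by rw [cX_self]; linarith⟩
      rw [h0] at this
      simp at this
  | succ n ih =>
    intro f q m hst hm hinv hn
    by_cases hqt : q = t
    · subst hqt
      have := Finset.sum_nonneg (fun g (_ : g ∈ Finset.univ) => hm g)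
      rw [cX_self, cY_self]
      exact Rch.refl _ _ ht (by linarith)
    · have hX : cX t f q ≠ 0 := fun h =>
        hqt (frame_inj P hP t f q t hst.1 ht (Or.inl (by rw [h, cX_self])))
      have hY : cY t f q ≠ 0 := fun h =>
        hqt (frame_inj P hP t f q t hst.1 ht (Or.inr (by rw [h, cY_self])))
      have hX' : cX t f q < 0 := lt_of_le_of_ne (by linarith [hst.2.1, hst.2.2.1]) hX
      have hY' : 0 < cY t f q := lt_of_le_of_ne hst.2.1 (Ne.symm hY)
      obtain ⟨g, r, lev, hst', hrad, hlev, hclean, hR⟩ := step P t f q ht hst hX' hY'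
        (fun z hz h => frame_inj P hP t f z q hz hst.1 (Or.inr h))
      have hmf := hinv f q hst.1 hst.2.1 hst.2.2.1 le_rfl
      have hnext := ih g r (Function.update m f lev) hst' ?_ ?_ ?_
      · have hsum : ∑ g, Function.update m f lev g = ∑ g, m g - m f + lev := by
          rw [Finset.sum_update_of_mem (Finset.mem_univ f),
            ← Finset.add_sum_erase Finset.univ m (Finset.mem_univ f), Finset.sdiff_singleton_eq_erase]
          ring
        rw [hsum] at hnext
        exact (hR.trans hnext).mono (by linarith)
      · intro h
        by_cases hf : h = f
        · subst hf; simpa using hlev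
        · simpa [Function.update_of_ne hf] using hm h
      · intro h z hz h1 h2 h3
        by_cases hf : h = f
        · subst hf
          simp only [Function.update_self]
          exact hclean z hz (by linarith) h2
        · rw [Function.update_of_ne hf]
          exact hinv h z hz h1 h2 (by linarith)
      · have hlt : (((Finset.univ : Finset Frame) ×ˢ P).filter
            (fun w => -cX t w.1 w.2 < -cX t g r)).card <
            (((Finset.univ : Finset Frame) ×ˢ P).filter
            (fun w => -cX t w.1 w.2 < -cX t f q)).card := by
          apply Finset.card_lt_card
          rw [Finset.ssubset_iff_of_subset]
          · refine ⟨(g, r), ?_, ?_⟩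
            · simp only [Finset.mem_filter, Finset.mem_product, Finset.mem_univ, true_and]
              exact ⟨hst'.1, hrad⟩
            · simp
          · intro w hw
            simp only [Finset.mem_filter] at hw ⊢
            exact ⟨hw.1, by linarith [hw.2]⟩
        omega

/-- Any two points are joined by a walk of length at most `34` times any bound on their
`L∞` distance. -/
theorem all_pairs (P : Finset (ℝ × ℝ)) (hP : GenPos P) (s t : ℝ × ℝ) (hs : s ∈ P) (ht : t ∈ P)
    (R : ℝ) (h1 : |s.1 - t.1| ≤ R) (h2 : |s.2 - t.2| ≤ R) : Rch P s t (34 * R) := by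
  have hR0 : 0 ≤ R := (abs_nonneg _).trans h1
  obtain ⟨a, b, hX, hY, hXR, hYR⟩ : ∃ a b : Bool, cX t (false, a, b) s ≤ 0 ∧
      cY t (false, a, b) s ≤ 0 ∧ -R ≤ cX t (false, a, b) s ∧ -R ≤ cY t (false, a, b) s := by
    have h1' := abs_le.mp h1
    have h2' := abs_le.mp h2
    rcases le_total (s.1 - t.1) 0 with hx | hx <;> rcases le_total (s.2 - t.2) 0 with hy | hy
    · refine ⟨true, true, ?_⟩
      simp only [cX, cY, sg, cond_true, cond_false]
      refine ⟨?_, ?_, ?_, ?_⟩ <;> linarith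
    · refine ⟨true, false, ?_⟩
      simp only [cX, cY, sg, cond_true, cond_false]
      refine ⟨?_, ?_, ?_, ?_⟩ <;> linarith
    · refine ⟨false, true, ?_⟩
      simp only [cX, cY, sg, cond_true, cond_false]
      refine ⟨?_, ?_, ?_, ?_⟩ <;> linarith
    · refine ⟨false, false, ?_⟩
      simp only [cX, cY, sg, cond_true, cond_false]
      refine ⟨?_, ?_, ?_, ?_⟩ <;> linarith
  have e5X : ∀ p, cX t (true, b, a) p = cY t (false, a, b) p := fun p => rfl
  have e5Y : ∀ p, cY t (true, b, a) p = cX t (false, a, b) p := fun p => rfl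
  obtain ⟨q, hq, hRch, hqx, hqy, hqs, hqp⟩ := chain P t (false, a, b) _ s hs (by linarith) le_rfl
  have key : ∀ g : Frame, St P t g q → -cX t g q ≤ R →
      -cX t g q - cY t g q = -cX t (false, a, b) q - cY t (false, a, b) q →
      Rch P s t (34 * R) := by
    intro g hst hrad heq
    have := main_walk P hP t ht _ g q (fun _ => 2 * R) hst (fun _ => by linarith)
      (fun g z hz h1 h2 h3 => by linarith) le_rfl
    have hsum : ∑ _g : Frame, 2 * R = 16 * R := by
      simp [Finset.sum_const]; ring
    rw [hsum, heq] at this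
    exact (hRch.trans this).mono (by linarith)
  by_cases hy0 : 0 ≤ cY t (false, a, b) q
  · exact key (false, a, b) ⟨hq, hy0, hqs, hqp⟩ (by linarith) rfl
  · have hx0 : 0 ≤ cX t (false, a, b) q := by
      by_contra hh
      have := hqp t ht (by rw [cX_self]; linarith) (by rw [cY_self]; linarith)
      rw [cX_self, cY_self] at this
      linarith
    refine key (true, b, a) ⟨hq, hx0, ?_, ?_⟩ ?_ ?_
    · rw [e5X, e5Y]; linarith
    · intro z hz h1 h2
      rw [e5X, e5Y]
      linarith [hqp z hz h2 h1]
    · rw [e5X]; linarith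
    · rw [e5X, e5Y]; ring

/-- If `a, b ∈ P` lie on consecutive sides of an axis-aligned square with empty interior,
then there is an `a`-`b`-path in the θ₄-graph of length at most `(√2+36)·‖a−b‖₂`. -/
theorem consecutive_sides_path (P : Finset (ℝ × ℝ)) (hP : GenPos P) (a b : ℝ × ℝ)
    (ha : a ∈ P) (hb : b ∈ P)
    (hsq : ∃ x0 y0 L : ℝ, 0 ≤ L ∧ onConsecutiveSides x0 y0 L a b ∧
      ∀ q ∈ P, ¬ (x0 < q.1 ∧ q.1 < x0 + L ∧ y0 < q.2 ∧ q.2 < y0 + L)) :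
    ∃ (k : ℕ) (v : ℕ → ℝ × ℝ), IsTheta4Path P k v ∧ v 0 = a ∧ v k = b ∧
      pathLength k v ≤ (Real.sqrt 2 + 36) * dist2 a b := by
  apply Rch.path
  have hx : |a.1 - b.1| ≤ dist2 a b := Real.abs_le_sqrt (by nlinarith [sq_nonneg (a.2 - b.2)])
  have hy : |a.2 - b.2| ≤ dist2 a b := Real.abs_le_sqrt (by nlinarith [sq_nonneg (a.1 - b.1)])
  refine (all_pairs P hP a b ha hb (dist2 a b) hx hy).mono ?_
  have h0 : 0 ≤ dist2 a b := Real.sqrt_nonneg _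
  nlinarith [Real.sqrt_nonneg 2, mul_nonneg (Real.sqrt_nonneg 2) h0]
end
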